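/- arXiv:1808.08736 — 2 statements merged into one kernel-verified Lean document; each statement's English description precedes it below -/
import Mathlib

section
/- Let ν ∈ (0,1], k ∈ ℤ with |k| ≥ 1, and λ ∈ ℝ. Let w : [−1,1] → ℂ be twice continuously differentiable with w(−1) = w(1) = 0, and set F(y) = −ν(w''(y) − k²w(y)) + ik(y−λ)w(y). Let φ : [−1,1] → ℂ be twice continuously differentiable with φ''(y) − k²φ(y) = w(y) on [−1,1] and φ(−1) = φ(1) = 0, and set ‖u‖_{L²} = (‖φ'‖_{L²}² + k²‖φ‖_{L²}²)^{1/2}. Then there is a constant C > 0, independent of ν, k, λ and w, such that ν^{1/6}|k|^{4/3}‖u‖_{L²} + ν^{1/6}|k|^{5/6}‖w‖_{L¹} + ν^{2/3}|k|^{1/3}‖w'‖_{L²} + (νk²)^{1/3}‖w‖_{L²} + |k|‖(y−λ)w‖_{L²} ≤ C‖F‖_{L²}. -/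
/-- The `L²` norm of a function on the interval `[-1,1]`. -/
noncomputable def nL2 (f : ℝ → ℂ) : ℝ :=
  (∫ y in Set.Icc (-1:ℝ) 1, ‖f y‖ ^ 2) ^ ((1:ℝ)/2)

/-- The `L¹` norm of a function on the interval `[-1,1]`. -/
noncomputable def nL1 (f : ℝ → ℂ) : ℝ :=
  ∫ y in Set.Icc (-1:ℝ) 1, ‖f y‖

lemma le_of_sq_le_sq_aux {a b : ℝ} (h : a^2 ≤ b^2) (hb : 0 ≤ b) : a ≤ b :=
  abs_le_of_sq_le_sq' h hb |>.2

open MeasureTheory intervalIntegral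

/-- real `L²` norm on `[-1,1]` -/
noncomputable def NN (f : ℝ → ℝ) : ℝ := Real.sqrt (∫ y in (-1:ℝ)..1, f y ^ 2)

lemma NN_nonneg (f : ℝ → ℝ) : 0 ≤ NN f := Real.sqrt_nonneg _

lemma NN_sq (f : ℝ → ℝ) : NN f ^ 2 = ∫ y in (-1:ℝ)..1, f y ^ 2 := by
  unfold NN
  rw [Real.sq_sqrt]
  exact intervalIntegral.integral_nonneg (by norm_num) (fun y _ => sq_nonneg _)

lemma nL2_eq (f : ℝ → ℂ) : nL2 f = NN (fun y => ‖f y‖) := by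
  unfold nL2 NN
  rw [Real.sqrt_eq_rpow, intervalIntegral.integral_of_le (by norm_num),
    MeasureTheory.integral_Icc_eq_integral_Ioc]

lemma nL1_eq (f : ℝ → ℂ) : nL1 f = ∫ y in (-1:ℝ)..1, ‖f y‖ := by
  unfold nL1
  rw [intervalIntegral.integral_of_le (by norm_num),
    MeasureTheory.integral_Icc_eq_integral_Ioc]

lemma cs_mul (c d : ℝ) (hcd : c ≤ d) (f g : ℝ → ℝ) (hf : Continuous f) (hg : Continuous g) :
    (∫ y in c..d, f y * g y) ≤
      Real.sqrt (∫ y in c..d, f y ^ 2) * Real.sqrt (∫ y in c..d, g y ^ 2) := by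
  have hfn : 0 ≤ ∫ y in c..d, f y ^ 2 :=
    intervalIntegral.integral_nonneg hcd (fun y _ => sq_nonneg _)
  have key : ∀ t : ℝ, 0 ≤ (∫ y in c..d, f y ^ 2) * (t * t)
      + (2 * ∫ y in c..d, f y * g y) * t + (∫ y in c..d, g y ^ 2) := by
    intro t
    have h0 : 0 ≤ ∫ y in c..d, (f y * t + g y) ^ 2 :=
      intervalIntegral.integral_nonneg hcd (fun y _ => sq_nonneg _)
    have h1 : (∫ y in c..d, (f y * t + g y) ^ 2) =
        ∫ y in c..d, ((t * t) * f y ^ 2 + (2 * t) * (f y * g y) + g y ^ 2) := by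
      congr 1; ext y; ring
    rw [h1, intervalIntegral.integral_add, intervalIntegral.integral_add,
      intervalIntegral.integral_const_mul, intervalIntegral.integral_const_mul] at h0
    · linarith
    all_goals exact Continuous.intervalIntegrable (by fun_prop) _ _
  have hd := discrim_le_zero key
  unfold discrim at hd
  rw [← Real.sqrt_mul hfn]
  apply Real.le_sqrt_of_sq_le
  linarith

lemma cs_le (f g h : ℝ → ℝ) (hf : Continuous f) (hg : Continuous g) (hh : Continuous h)
    (hle : ∀ y, h y ≤ f y * g y) : (∫ y in (-1:ℝ)..1, h y) ≤ NN f * NN g := by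
  refine le_trans ?_ (cs_mul (-1) 1 (by norm_num) f g hf hg)
  apply intervalIntegral.integral_mono_on (by norm_num)
  · exact hh.intervalIntegrable _ _
  · exact (hf.mul hg).intervalIntegrable _ _
  · intro y _; exact hle y

/-- pointwise real-part bound -/
lemma cbound (a b c d : ℝ) : a * c + b * d ≤ Real.sqrt (a^2+b^2) * Real.sqrt (c^2+d^2) := by
  rw [← Real.sqrt_mul (by positivity)]
  apply Real.le_sqrt_of_sq_le
  nlinarith [sq_nonneg (a*d-b*c)]

lemma norm_eq (z : ℂ) : ‖z‖ = Real.sqrt (z.re^2+z.im^2) := by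
  rw [Complex.norm_def, Complex.normSq_apply]; congr 1; ring

lemma norm_sq' (z : ℂ) : ‖z‖^2 = z.re^2+z.im^2 := by
  rw [norm_eq, Real.sq_sqrt (by positivity)]

lemma algebra_core (a b x F : ℝ) (ha : 0 ≤ a) (hb : 0 ≤ b) (hx : 0 ≤ x) (hF : 0 ≤ F)
    (h1 : b^2 ≤ F*a) (h2 : x^2 ≤ F*x + a*b) (h3 : a^2 ≤ 2*x*b) :
    a ≤ 5*F ∧ b ≤ 3*F ∧ x ≤ 6*F := by
  have hA : a ≤ 5*F := by
    by_contra hc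
    push Not at hc
    have ha0 : 0 < a := by linarith
    have h4 : x^2 ≤ F^2 + 2*(a*b) := by nlinarith [sq_nonneg (x-F)]
    have h5 : a^4 ≤ 4*x^2*b^2 := by
      have := pow_le_pow_left₀ (sq_nonneg a) h3 2
      nlinarith
    have h6 : a^4 ≤ 4*(F^2+2*(a*b))*(F*a) := by
      calc a^4 ≤ 4*x^2*b^2 := h5
        _ ≤ 4*(F^2+2*(a*b))*(F*a) := by gcongr
    have h7 : a^3 ≤ 4*(F^2+2*(a*b))*F := by
      have : a*a^3 ≤ a*(4*(F^2+2*(a*b))*F) := by nlinarith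
      exact le_of_mul_le_mul_left this ha0
    have hF5 : F ≤ a/5 := by linarith
    have hb2 : b ≤ a * (9/20) := by
      refine le_of_sq_le_sq_aux ?_ (by positivity)
      nlinarith
    have h8 : 4*(F^2+2*(a*b))*F ≤ 4*((a/5)^2+2*(a*(a*(9/20))))*(a/5) := by gcongr
    nlinarith [pow_pos ha0 3]
  have hB : b ≤ 3*F := by
    refine le_of_sq_le_sq_aux ?_ (by positivity)
    nlinarith
  refine ⟨hA, hB, ?_⟩
  have hab : a*b ≤ (5*F)*(3*F) := by gcongr
  by_contra hc
  push Not at hc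
  nlinarith

lemma ftc (f f' : ℝ → ℝ) (c d : ℝ) (h : ∀ y, HasDerivAt f (f' y) y) (hc : Continuous f') :
    ∫ y in c..d, f' y = f d - f c :=
  intervalIntegral.integral_eq_sub_of_hasDerivAt (fun y _ => h y) (hc.intervalIntegrable _ _)

lemma arctan_bound (lam δ : ℝ) (hδ : 0 < δ) :
    ∫ y in (-1:ℝ)..1, ((y-lam)^2+δ^2)⁻¹ ≤ 4/δ := by
  have hpos : ∀ y:ℝ, (y-lam)^2+δ^2 ≠ 0 := fun y => by positivity
  rw [ftc (fun y => Real.arctan ((y-lam)/δ)/δ)]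
  · have h1 := Real.arctan_lt_pi_div_two ((1-lam)/δ)
    have h2 := Real.neg_pi_div_two_lt_arctan ((-1-lam)/δ)
    rw [← sub_div]
    have := Real.pi_lt_four
    gcongr
    linarith
  · intro y
    have h := ((((hasDerivAt_id y).sub_const lam).div_const δ).arctan).div_const δ
    have h2 := hpos y
    have h3 : 1 + ((y-lam)/δ)^2 ≠ 0 := by positivity
    have h4 : δ^2 + (y-lam)^2 ≠ 0 := by positivity
    have e : ((y-lam)^2+δ^2)⁻¹ = 1 / (1 + ((y-lam)/δ)^2) * (1/δ) / δ := by
      field_simp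
      ring
    rw [e]
    exact h
  · exact Continuous.inv₀ (by fun_prop) hpos

lemma L1_bound (g : ℝ → ℝ) (lam δ : ℝ) (hδ : 0 < δ) (hg : Continuous g) :
    (∫ y in (-1:ℝ)..1, g y) ^ 2 * δ ≤ 4 * (NN (fun y => (y-lam) * g y)^2 + δ^2 * NN g ^2)
      ∨ (∫ y in (-1:ℝ)..1, g y) < 0 := by
  rcases lt_or_ge (∫ y in (-1:ℝ)..1, g y) 0 with h | h
  · exact Or.inr h
  left
  have hpos : ∀ y:ℝ, 0 < (y-lam)^2+δ^2 := fun y => by positivity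
  have hc := cs_le (fun y => Real.sqrt ((y-lam)^2+δ^2) * g y)
    (fun y => (Real.sqrt ((y-lam)^2+δ^2))⁻¹) g (by fun_prop)
    (Continuous.inv₀ (by fun_prop) (fun y => (Real.sqrt_pos.2 (hpos y)).ne')) hg
    (fun y => by
      have := (Real.sqrt_pos.2 (hpos y)).ne'
      apply le_of_eq; field_simp)
  have hs := pow_le_pow_left₀ h hc 2
  rw [mul_pow, NN_sq, NN_sq] at hs
  have e1 : (∫ y in (-1:ℝ)..1, ((Real.sqrt ((y-lam)^2+δ^2))⁻¹)^2) ≤ 4/δ := by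
    refine le_trans (le_of_eq ?_) (arctan_bound lam δ hδ)
    congr 1; ext y
    rw [inv_pow, Real.sq_sqrt (hpos y).le]
  have e2 : (∫ y in (-1:ℝ)..1, (Real.sqrt ((y-lam)^2+δ^2) * g y)^2)
      = NN (fun y => (y-lam) * g y)^2 + δ^2 * NN g ^2 := by
    rw [NN_sq, NN_sq, ← intervalIntegral.integral_const_mul, ← intervalIntegral.integral_add]
    · congr 1; ext y
      rw [mul_pow, Real.sq_sqrt (hpos y).le]; ring
    all_goals exact Continuous.intervalIntegrable (by fun_prop) _ _
  rw [e2] at hs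
  have hn : 0 ≤ NN (fun y => (y-lam) * g y)^2 + δ^2 * NN g ^2 := by positivity
  have h9 := hs.trans (mul_le_mul_of_nonneg_left e1 hn)
  calc _ ≤ ((NN (fun y => (y-lam) * g y)^2 + δ^2 * NN g ^2) * (4/δ)) * δ := by gcongr
    _ = _ := by field_simp

lemma c2_facts (w : ℝ → ℂ) (hw : ContDiff ℝ 2 w) :
    (∀ y, HasDerivAt w (deriv w y) y) ∧ (∀ y, HasDerivAt (deriv w) (deriv (deriv w) y) y) ∧
    Continuous w ∧ Continuous (deriv w) ∧ Continuous (deriv (deriv w)) := by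
  have h1 : ContDiff ℝ 1 (deriv w) := by
    have : ContDiff ℝ (1+1) w := by simpa [one_add_one_eq_two] using hw
    exact (contDiff_succ_iff_deriv.1 this).2.2
  exact ⟨fun y => (hw.differentiable (by norm_num) y).hasDerivAt,
    fun y => (h1.differentiable (by norm_num) y).hasDerivAt, hw.continuous, h1.continuous,
    h1.continuous_deriv le_rfl⟩

lemma hre {w : ℝ → ℂ} {w' : ℂ} {y : ℝ} (h : HasDerivAt w w' y) :
    HasDerivAt (fun y => (w y).re) w'.re y :=
  Complex.reCLM.hasFDerivAt.comp_hasDerivAt y h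

lemma him {w : ℝ → ℂ} {w' : ℂ} {y : ℝ} (h : HasDerivAt w w' y) :
    HasDerivAt (fun y => (w y).im) w'.im y :=
  Complex.imCLM.hasFDerivAt.comp_hasDerivAt y h

lemma est1 (ν k lam : ℝ) (hν : 0 < ν) (w F : ℝ → ℂ) (hw : ContDiff ℝ 2 w)
    (hl : w (-1) = 0) (hr : w 1 = 0) (hFc : Continuous F)
    (hF1 : ∀ y, (F y).re = -ν * ((deriv (deriv w) y).re - k^2*(w y).re) - k*(y-lam)*(w y).im)
    (hF2 : ∀ y, (F y).im = -ν * ((deriv (deriv w) y).im - k^2*(w y).im) + k*(y-lam)*(w y).re) :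
    ν * NN (fun y => ‖deriv w y‖)^2 ≤ NN (fun y => ‖F y‖) * NN (fun y => ‖w y‖) := by
  obtain ⟨d1, d2, c0, c1, c2⟩ := c2_facts w hw
  have i1 := ftc (fun y => (deriv w y).re * (w y).re + (deriv w y).im * (w y).im) _ (-1) 1
    (fun y => ((hre (d2 y)).mul (hre (d1 y))).add ((him (d2 y)).mul (him (d1 y)))) (by fun_prop)
  simp only [hl, hr] at i1
  have hc := cs_le (fun y => ‖F y‖) (fun y => ‖w y‖)
    (fun y => (F y).re * (w y).re + (F y).im * (w y).im) (by fun_prop) (by fun_prop) (by fun_prop)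
    (fun y => by rw [norm_eq, norm_eq]; exact cbound _ _ _ _)
  refine le_trans ?_ hc
  rw [NN_sq]
  have e : (∫ y in (-1:ℝ)..1, ((F y).re * (w y).re + (F y).im * (w y).im)) =
      ν * (∫ y in (-1:ℝ)..1, ‖deriv w y‖^2) + ν*k^2 * (∫ y in (-1:ℝ)..1, ‖w y‖^2) - ν *
      (∫ y in (-1:ℝ)..1, ((deriv (deriv w) y).re * (w y).re + (deriv w y).re * (deriv w y).re +
        ((deriv (deriv w) y).im * (w y).im + (deriv w y).im * (deriv w y).im))) := by
    rw [← intervalIntegral.integral_const_mul, ← intervalIntegral.integral_const_mul,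
      ← intervalIntegral.integral_const_mul, ← intervalIntegral.integral_add,
      ← intervalIntegral.integral_sub]
    · congr 1; ext y
      rw [hF1, hF2, norm_sq', norm_sq']; ring
    all_goals exact Continuous.intervalIntegrable (by fun_prop) _ _
  rw [e, i1]
  have : 0 ≤ ν*k^2 * (∫ y in (-1:ℝ)..1, ‖w y‖^2) := by
    have := intervalIntegral.integral_nonneg (f := fun y => ‖w y‖^2) (μ := volume)
      (by norm_num : (-1:ℝ) ≤ 1) (fun y _ => sq_nonneg _)
    positivity
  simp
  linarith

lemma est2 (ν k lam : ℝ) (hν : 0 < ν) (w F : ℝ → ℂ) (hw : ContDiff ℝ 2 w)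
    (hl : w (-1) = 0) (hr : w 1 = 0) (hFc : Continuous F)
    (hF1 : ∀ y, (F y).re = -ν * ((deriv (deriv w) y).re - k^2*(w y).re) - k*(y-lam)*(w y).im)
    (hF2 : ∀ y, (F y).im = -ν * ((deriv (deriv w) y).im - k^2*(w y).im) + k*(y-lam)*(w y).re) :
    |k| * NN (fun y => (y-lam) * ‖w y‖)^2 ≤ NN (fun y => ‖F y‖) * NN (fun y => (y-lam) * ‖w y‖)
      + ν * (NN (fun y => ‖deriv w y‖) * NN (fun y => ‖w y‖)) := by
  obtain ⟨d1, d2, c0, c1, c2⟩ := c2_facts w hw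
  -- the sign of k
  obtain ⟨s, hs, hs2⟩ : ∃ s : ℝ, s * k = |k| ∧ (s = 1 ∨ s = -1) := by
    rcases le_total 0 k with h | h
    · exact ⟨1, by rw [abs_of_nonneg h, one_mul], Or.inl rfl⟩
    · exact ⟨-1, by rw [abs_of_nonpos h]; ring, Or.inr rfl⟩
  have hss : s^2 = 1 := by rcases hs2 with h | h <;> rw [h] <;> norm_num
  have i1 := ftc (fun y => (y-lam) * ((deriv w y).im * (w y).re - (deriv w y).re * (w y).im))
    _ (-1) 1
    (fun y => ((hasDerivAt_id y).sub_const lam).mul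
      (((him (d2 y)).mul (hre (d1 y))).sub ((hre (d2 y)).mul (him (d1 y)))))
    (by simp only [id]; fun_prop)
  simp only [hl, hr, id] at i1
  have hNabs : NN (fun y => |y-lam| * ‖w y‖) = NN (fun y => (y-lam) * ‖w y‖) := by
    unfold NN; congr 2; ext y; rw [mul_pow, mul_pow, sq_abs]
  have hc := cs_le (fun y => ‖F y‖) (fun y => |y-lam| * ‖w y‖)
    (fun y => s * (y-lam) * ((F y).im * (w y).re - (F y).re * (w y).im))
    (by fun_prop) (by fun_prop) (by fun_prop)
    (fun y => by
      have h := cbound (F y).re (F y).im (-(s * (y-lam) * (w y).im)) (s * (y-lam) * (w y).re)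
      have e : Real.sqrt ((-(s * (y-lam) * (w y).im))^2 + (s * (y-lam) * (w y).re)^2)
          = |y-lam| * ‖w y‖ := by
        rw [norm_eq, ← Real.sqrt_sq_eq_abs, ← Real.sqrt_mul (sq_nonneg _)]
        congr 1
        linear_combination ((y-lam)^2 * ((w y).im^2 + (w y).re^2)) * hss
      rw [e, ← norm_eq] at h
      linarith)
  have hc2 := cs_le (fun y => ‖deriv w y‖) (fun y => ‖w y‖)
    (fun y => -s * ((deriv w y).im * (w y).re - (deriv w y).re * (w y).im))
    (by fun_prop) (by fun_prop) (by fun_prop)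
    (fun y => by
      have h := cbound (deriv w y).re (deriv w y).im (s * (w y).im) (-s * (w y).re)
      have e : Real.sqrt ((s * (w y).im)^2 + (-s * (w y).re)^2) = ‖w y‖ := by
        rw [norm_eq]
        congr 1
        linear_combination ((w y).im^2 + (w y).re^2) * hss
      rw [e, ← norm_eq] at h
      linarith)
  rw [hNabs] at hc
  have hfin : |k| * NN (fun y => (y-lam) * ‖w y‖)^2 =
      (∫ y in (-1:ℝ)..1, s * (y-lam) * ((F y).im * (w y).re - (F y).re * (w y).im))
      + ν * (∫ y in (-1:ℝ)..1, -s * ((deriv w y).im * (w y).re - (deriv w y).re * (w y).im))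
      + (ν * s) * (∫ y in (-1:ℝ)..1, (1 * ((deriv w y).im * (w y).re - (deriv w y).re * (w y).im)
        + (y-lam) * ((deriv (deriv w) y).im * (w y).re + (deriv w y).im * (deriv w y).re
        - ((deriv (deriv w) y).re * (w y).im + (deriv w y).re * (deriv w y).im)))) := by
    rw [NN_sq, ← intervalIntegral.integral_const_mul, ← intervalIntegral.integral_const_mul,
      ← intervalIntegral.integral_const_mul, ← intervalIntegral.integral_add,
      ← intervalIntegral.integral_add]
    · congr 1; ext y
      rw [hF1, hF2, mul_pow, norm_sq', ← hs]; ring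
    all_goals exact Continuous.intervalIntegrable (by fun_prop) _ _
  rw [hfin, i1]
  have := mul_le_mul_of_nonneg_left hc2 hν.le
  simp only [Complex.zero_re, Complex.zero_im]
  linarith

lemma est3 (lam : ℝ) (w : ℝ → ℂ) (hw : ContDiff ℝ 2 w)
    (hl : w (-1) = 0) (hr : w 1 = 0) :
    NN (fun y => ‖w y‖)^2 ≤ 2 * NN (fun y => (y-lam) * ‖w y‖) * NN (fun y => ‖deriv w y‖) := by
  obtain ⟨d1, d2, c0, c1, c2⟩ := c2_facts w hw
  have i1 := ftc (fun y => (y-lam) * ((w y).re * (w y).re + (w y).im * (w y).im))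
    _ (-1) 1
    (fun y => ((hasDerivAt_id y).sub_const lam).mul
      (((hre (d1 y)).mul (hre (d1 y))).add ((him (d1 y)).mul (him (d1 y)))))
    (by simp only [id]; fun_prop)
  simp only [hl, hr, id] at i1
  have hNabs : NN (fun y => |y-lam| * ‖w y‖) = NN (fun y => (y-lam) * ‖w y‖) := by
    unfold NN; congr 2; ext y; rw [mul_pow, mul_pow, sq_abs]
  have hc := cs_le (fun y => |y-lam| * ‖w y‖) (fun y => ‖deriv w y‖)
    (fun y => -(y-lam) * ((deriv w y).re * (w y).re + (deriv w y).im * (w y).im))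
    (by fun_prop) (by fun_prop) (by fun_prop)
    (fun y => by
      have h := cbound (-(y-lam) * (w y).re) (-(y-lam) * (w y).im) (deriv w y).re (deriv w y).im
      have e : Real.sqrt ((-(y-lam) * (w y).re)^2 + (-(y-lam) * (w y).im)^2)
          = |y-lam| * ‖w y‖ := by
        rw [norm_eq, ← Real.sqrt_sq_eq_abs, ← Real.sqrt_mul (sq_nonneg _)]
        congr 1
        ring
      rw [e, ← norm_eq] at h
      linarith)
  rw [hNabs] at hc
  have hfin : NN (fun y => ‖w y‖)^2 =
      2 * (∫ y in (-1:ℝ)..1, -(y-lam) * ((deriv w y).re * (w y).re + (deriv w y).im * (w y).im))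
      + (∫ y in (-1:ℝ)..1, (1 * ((w y).re * (w y).re + (w y).im * (w y).im)
        + (y-lam) * ((deriv w y).re * (w y).re + (w y).re * (deriv w y).re
        + ((deriv w y).im * (w y).im + (w y).im * (deriv w y).im)))) := by
    rw [NN_sq, ← intervalIntegral.integral_const_mul, ← intervalIntegral.integral_add]
    · congr 1; ext y
      rw [norm_sq']; ring
    all_goals exact Continuous.intervalIntegrable (by fun_prop) _ _
  rw [hfin, i1]
  simp only [Complex.zero_re, Complex.zero_im]
  linarith

lemma sup_bound (φ : ℝ → ℂ) (hφ : ContDiff ℝ 2 φ) (hl : φ (-1) = 0) (y : ℝ)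
    (hy : y ∈ Set.Icc (-1:ℝ) 1) :
    ‖φ y‖^2 ≤ 2 * (NN (fun y => ‖deriv φ y‖) * NN (fun y => ‖φ y‖)) := by
  obtain ⟨d1, d2, c0, c1, c2⟩ := c2_facts φ hφ
  have i1 := ftc (fun y => ((φ y).re * (φ y).re + (φ y).im * (φ y).im))
    _ (-1) y
    (fun y => (((hre (d1 y)).mul (hre (d1 y))).add ((him (d1 y)).mul (him (d1 y)))))
    (by fun_prop)
  simp only [hl, Complex.zero_re, Complex.zero_im] at i1
  have e : ‖φ y‖^2 = ∫ y in (-1:ℝ)..y, ((deriv φ y).re * (φ y).re + (φ y).re * (deriv φ y).re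
        + ((deriv φ y).im * (φ y).im + (φ y).im * (deriv φ y).im)) := by
    rw [i1, norm_sq']; ring
  have hc := cs_le (fun y => ‖deriv φ y‖) (fun y => ‖φ y‖) (fun y => ‖deriv φ y‖ * ‖φ y‖)
    (by fun_prop) (by fun_prop) (by fun_prop) (fun y => le_rfl)
  have h2 : (∫ y in (-1:ℝ)..y, ((deriv φ y).re * (φ y).re + (φ y).re * (deriv φ y).re
        + ((deriv φ y).im * (φ y).im + (φ y).im * (deriv φ y).im)))
      ≤ ∫ y in (-1:ℝ)..y, 2 * (‖deriv φ y‖ * ‖φ y‖) := by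
    apply intervalIntegral.integral_mono_on hy.1
    · exact Continuous.intervalIntegrable (by fun_prop) _ _
    · exact Continuous.intervalIntegrable (by fun_prop) _ _
    · intro z _
      have := cbound (deriv φ z).re (deriv φ z).im (φ z).re (φ z).im
      rw [← norm_eq, ← norm_eq] at this
      linarith
  have h3 : (∫ y in (-1:ℝ)..y, 2 * (‖deriv φ y‖ * ‖φ y‖))
      ≤ ∫ y in (-1:ℝ)..1, 2 * (‖deriv φ y‖ * ‖φ y‖) := by
    apply intervalIntegral.integral_mono_interval le_rfl hy.1 hy.2
    · exact Filter.Eventually.of_forall (fun z => by positivity)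
    · exact Continuous.intervalIntegrable (by fun_prop) _ _
  rw [intervalIntegral.integral_const_mul (a := (-1:ℝ)) (b := 1)] at h3
  linarith

lemma est5 (k : ℝ) (w φ : ℝ → ℂ) (hwc : Continuous w) (hφ : ContDiff ℝ 2 φ)
    (h : ∀ y ∈ Set.Icc (-1:ℝ) 1, deriv (deriv φ) y - (k:ℂ)^2 * φ y = w y)
    (hl : φ (-1) = 0) (hr : φ 1 = 0) (U : ℝ) (hU : 0 ≤ U)
    (hU2 : U^2 = NN (fun y => ‖deriv φ y‖)^2 + k^2 * NN (fun y => ‖φ y‖)^2) :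
    |k| * U^2 ≤ (∫ y in (-1:ℝ)..1, ‖w y‖)^2 := by
  obtain ⟨d1, d2, c0, c1, c2⟩ := c2_facts φ hφ
  set L := ∫ y in (-1:ℝ)..1, ‖w y‖ with hL
  have hL0 : 0 ≤ L := intervalIntegral.integral_nonneg (by norm_num) (fun y _ => norm_nonneg _)
  set M := Real.sqrt (2 * (NN (fun y => ‖deriv φ y‖) * NN (fun y => ‖φ y‖))) with hM
  have hn1 := NN_nonneg (fun y => ‖deriv φ y‖)
  have hn2 := NN_nonneg (fun y => ‖φ y‖)
  have hM2 : M^2 = 2 * (NN (fun y => ‖deriv φ y‖) * NN (fun y => ‖φ y‖)) :=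
    Real.sq_sqrt (by positivity)
  have hM0 : 0 ≤ M := Real.sqrt_nonneg _
  have hsup : ∀ y ∈ Set.Icc (-1:ℝ) 1, ‖φ y‖ ≤ M := fun y hy =>
    Real.le_sqrt_of_sq_le (sup_bound φ hφ hl y hy)
  have hkM : |k| * M^2 ≤ U^2 := by
    rw [hM2, hU2, ← sq_abs k]
    nlinarith [sq_nonneg (NN (fun y => ‖deriv φ y‖) - |k| * NN (fun y => ‖φ y‖))]
  have i1 := ftc (fun y => (deriv φ y).re * (φ y).re + (deriv φ y).im * (φ y).im) _ (-1) 1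
    (fun y => ((hre (d2 y)).mul (hre (d1 y))).add ((him (d2 y)).mul (him (d1 y)))) (by fun_prop)
  simp only [hl, hr, Complex.zero_re, Complex.zero_im] at i1
  have hUle : U^2 ≤ L * M := by
    have e : U^2 = ∫ y in (-1:ℝ)..1, (‖deriv φ y‖^2 + k^2 * ‖φ y‖^2 -
        ((deriv (deriv φ) y).re * (φ y).re + (deriv φ y).re * (deriv φ y).re +
        ((deriv (deriv φ) y).im * (φ y).im + (deriv φ y).im * (deriv φ y).im))) := by
      rw [intervalIntegral.integral_sub, intervalIntegral.integral_add,
        intervalIntegral.integral_const_mul, i1, hU2, NN_sq, NN_sq]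
      · ring
      all_goals exact Continuous.intervalIntegrable (by fun_prop) _ _
    rw [e, hL, ← intervalIntegral.integral_mul_const]
    apply intervalIntegral.integral_mono_on (by norm_num)
    · exact Continuous.intervalIntegrable (by fun_prop) _ _
    · exact Continuous.intervalIntegrable (by fun_prop) _ _
    · intro y hy
      have hh := h y hy
      have hre' : (w y).re = (deriv (deriv φ) y).re - k^2 * (φ y).re := by
        rw [← hh, ← Complex.ofReal_pow, Complex.sub_re, Complex.re_ofReal_mul]
      have him' : (w y).im = (deriv (deriv φ) y).im - k^2 * (φ y).im := by
        rw [← hh, ← Complex.ofReal_pow, Complex.sub_im, Complex.im_ofReal_mul]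
      have hb := cbound (-(w y).re) (-(w y).im) (φ y).re (φ y).im
      rw [neg_sq, neg_sq, ← norm_eq, ← norm_eq] at hb
      have hb2 := mul_le_mul_of_nonneg_left (hsup y hy) (norm_nonneg (w y))
      refine le_trans (le_trans (le_of_eq ?_) hb) hb2
      rw [norm_sq', norm_sq', hre', him']; ring
  rcases hU.eq_or_lt with h0 | h0
  · rw [← h0]; nlinarith [sq_nonneg L]
  · have h4 : (U^2)^2 ≤ (L*M)^2 := pow_le_pow_left₀ (sq_nonneg _) hUle 2
    have h5 : U^2 * (|k| * U^2) ≤ U^2 * L^2 := by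
      calc U^2 * (|k| * U^2) = |k| * (U^2)^2 := by ring
        _ ≤ |k| * (L*M)^2 := by gcongr
        _ = L^2 * (|k| * M^2) := by ring
        _ ≤ L^2 * U^2 := by gcongr
        _ = _ := by ring
    exact le_of_mul_le_mul_left h5 (by positivity)

lemma algebra_final (p q A B X L U F : ℝ) (hp : 0 < p) (hq : 0 < q) (hA : 0 ≤ A) (hB : 0 ≤ B)
    (hX : 0 ≤ X) (hL : 0 ≤ L) (hU : 0 ≤ U) (hF : 0 ≤ F)
    (E1 : p^6 * B^2 ≤ F * A) (E2 : q^6 * X^2 ≤ F * X + p^6 * (B * A)) (E3 : A^2 ≤ 2 * X * B)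
    (E4 : L^2 * (p^2/q^2) ≤ 4 * (X^2 + (p^2/q^2)^2 * A^2)) (E5 : q^6 * U^2 ≤ L^2) :
    p * q^8 * U + p * q^5 * L + p^4 * q^2 * B + p^2*q^4 * A + q^6 * X ≤ 100 * F := by
  obtain ⟨ha, hb, hx⟩ := algebra_core (p^2*q^4*A) (p^4*q^2*B) (q^6*X) F (by positivity)
    (by positivity) (by positivity) hF
    (by have := mul_le_mul_of_nonneg_left E1 (by positivity : 0 ≤ p^2*q^4)
        linarith)
    (by have := mul_le_mul_of_nonneg_left E2 (by positivity : 0 ≤ q^6)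
        linarith)
    (by have := mul_le_mul_of_nonneg_left E3 (by positivity : 0 ≤ p^4*q^8)
        linarith)
  have e1 : (p*q^5*L)^2 ≤ 4*((q^6*X)^2 + (p^2*q^4*A)^2) := by
    have := mul_le_mul_of_nonneg_left E4 (by positivity : 0 ≤ q^12)
    calc (p*q^5*L)^2 = q^12 * (L^2 * (p^2/q^2)) := by field_simp
      _ ≤ _ := this
      _ = _ := by field_simp
  have e2 : (q^6*X)^2 ≤ (6*F)^2 := by gcongr
  have e3 : (p^2*q^4*A)^2 ≤ (5*F)^2 := by gcongr
  have hl : p*q^5*L ≤ 16*F := by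
    refine le_of_sq_le_sq_aux ?_ (by positivity)
    nlinarith [sq_nonneg F]
  have hu : q^3 * U ≤ L := by
    refine le_of_sq_le_sq_aux ?_ hL
    nlinarith
  have hu2 : p*q^8*U ≤ p*q^5*L := by
    have := mul_le_mul_of_nonneg_left hu (by positivity : 0 ≤ p*q^5)
    linarith
  linarith

lemma rpow_six (x : ℝ) (hx : 0 < x) (n : ℕ) (r : ℝ) (hr : r = n/6) :
    x ^ r = (x ^ ((1:ℝ)/6)) ^ n := by
  rw [← Real.rpow_natCast, ← Real.rpow_mul hx.le, hr]; congr 1; ring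

/-- Resolvent estimate for the linearized operator around Couette, Navier-slip boundary
conditions, real spectral parameter `λ`. -/
theorem statement0 :
    ∃ C : ℝ, 0 < C ∧
      ∀ (ν : ℝ) (k : ℤ) (lam : ℝ) (w φ F : ℝ → ℂ),
        0 < ν → ν ≤ 1 → 1 ≤ |k| →
        ContDiff ℝ 2 w → w (-1) = 0 → w 1 = 0 →
        (F = fun y : ℝ => -(ν : ℂ) * (deriv (deriv w) y - (k:ℂ)^2 * w y)
            + Complex.I * (k:ℂ) * ((y:ℂ) - (lam:ℂ)) * w y) →
        ContDiff ℝ 2 φ →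
        (∀ y ∈ Set.Icc (-1:ℝ) 1, deriv (deriv φ) y - (k:ℂ)^2 * φ y = w y) →
        φ (-1) = 0 → φ 1 = 0 →
        ν ^ ((1:ℝ)/6) * |(k:ℝ)| ^ ((4:ℝ)/3) *
            ((nL2 (deriv φ) ^ 2 + (k:ℝ)^2 * nL2 φ ^ 2) ^ ((1:ℝ)/2))
          + ν ^ ((1:ℝ)/6) * |(k:ℝ)| ^ ((5:ℝ)/6) * nL1 w
          + ν ^ ((2:ℝ)/3) * |(k:ℝ)| ^ ((1:ℝ)/3) * nL2 (deriv w)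
          + (ν * (k:ℝ)^2) ^ ((1:ℝ)/3) * nL2 w
          + |(k:ℝ)| * nL2 (fun y : ℝ => ((y:ℂ) - (lam:ℂ)) * w y)
          ≤ C * nL2 F := by
  refine ⟨100, by norm_num, ?_⟩
  intro ν k lam w φ F hν _ hk hw hl hr hF hφ hφw hφl hφr
  obtain ⟨d1, d2, c0, c1, c2⟩ := c2_facts w hw
  have hk1 : (1:ℝ) ≤ |(k:ℝ)| := by exact_mod_cast hk
  have hK : 0 < |(k:ℝ)| := by linarith
  have hFc : Continuous F := by rw [hF]; fun_prop
  have hkc : (k:ℂ) = (((k:ℝ)):ℂ) := by simp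
  have hF1 : ∀ y, (F y).re = -ν * ((deriv (deriv w) y).re - (k:ℝ)^2*(w y).re)
      - (k:ℝ)*(y-lam)*(w y).im := by
    intro y; rw [hF, hkc]; simp [pow_two]; try ring
  have hF2 : ∀ y, (F y).im = -ν * ((deriv (deriv w) y).im - (k:ℝ)^2*(w y).im)
      + (k:ℝ)*(y-lam)*(w y).re := by
    intro y; rw [hF, hkc]; simp [pow_two]; try ring
  have E1 := est1 ν k lam hν w F hw hl hr hFc hF1 hF2
  have E2 := est2 ν k lam hν w F hw hl hr hFc hF1 hF2
  have E3 := est3 lam w hw hl hr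
  have hX : nL2 (fun y : ℝ => ((y:ℂ) - (lam:ℂ)) * w y) = NN (fun y => (y-lam) * ‖w y‖) := by
    rw [nL2_eq]; unfold NN; congr 2; ext y
    beta_reduce
    rw [norm_mul, ← Complex.ofReal_sub, Complex.norm_real, mul_pow, mul_pow, Real.norm_eq_abs,
      sq_abs]
  rw [nL1_eq, hX, nL2_eq, nL2_eq, nL2_eq, nL2_eq, nL2_eq, ← Real.sqrt_eq_rpow]
  have hL0 : 0 ≤ ∫ y in (-1:ℝ)..1, ‖w y‖ :=
    intervalIntegral.integral_nonneg (by norm_num) (fun y _ => norm_nonneg _)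
  have hUU : 0 ≤ NN (fun y => ‖deriv φ y‖)^2 + (k:ℝ)^2 * NN (fun y => ‖φ y‖)^2 := by positivity
  have E5 := est5 k w φ c0 hφ (by simpa using hφw) hφl hφr _ (Real.sqrt_nonneg _) (Real.sq_sqrt hUU)
  set p := ν ^ ((1:ℝ)/6) with hp
  set q := |(k:ℝ)| ^ ((1:ℝ)/6) with hq
  have hp0 : 0 < p := Real.rpow_pos_of_pos hν _
  have hq0 : 0 < q := Real.rpow_pos_of_pos hK _
  have hp6 : ν = p^6 := by rw [hp, ← rpow_six ν hν 6 1 (by norm_num), Real.rpow_one]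
  have hq6 : |(k:ℝ)| = q^6 := by rw [hq, ← rpow_six _ hK 6 1 (by norm_num), Real.rpow_one]
  have r1 : |(k:ℝ)| ^ ((4:ℝ)/3) = q^8 := rpow_six _ hK 8 _ (by norm_num)
  have r2 : |(k:ℝ)| ^ ((5:ℝ)/6) = q^5 := rpow_six _ hK 5 _ (by norm_num)
  have r3 : |(k:ℝ)| ^ ((1:ℝ)/3) = q^2 := rpow_six _ hK 2 _ (by norm_num)
  have r4 : ν ^ ((2:ℝ)/3) = p^4 := rpow_six _ hν 4 _ (by norm_num)
  have r5 : (ν * (k:ℝ)^2) ^ ((1:ℝ)/3) = p^2*q^4 := by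
    rw [← sq_abs (k:ℝ), Real.mul_rpow hν.le (sq_nonneg _), rpow_six ν hν 2 _ (by norm_num),
      ← Real.rpow_natCast |(k:ℝ)|, ← Real.rpow_mul hK.le, rpow_six _ hK 4 _ (by norm_num)]
  rw [r1, r2, r3, r4, r5]
  rw [hp6] at E1 E2
  have E4 := (L1_bound (fun y => ‖w y‖) lam (p^2/q^2) (by positivity) (by fun_prop)).resolve_right
    (not_lt.2 hL0)
  rw [hq6] at E2 E5 ⊢
  exact algebra_final p q _ _ _ _ _ _ hp0 hq0 (NN_nonneg _) (NN_nonneg _) (NN_nonneg _) hL0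
    (Real.sqrt_nonneg _) (NN_nonneg _) E1 E2 E3 E4 E5
end

section
/- There exist constants ε₀ ∈ (0,1) and C > 0 with the following property. Let ν ∈ (0,1], k ∈ ℤ with |k| ≥ 1, ε ∈ (0, ε₀], and λ ∈ ℝ. Let φ : [−1,1] → ℂ be four times continuously differentiable with φ(±1) = 0 and φ''(±1) = 0; set w = φ'' − k²φ (so w(±1) = 0), F(y) = −ν(w''(y) − k²w(y)) + ik(y−λ)w(y) − ε·ν^{1/3}|k|^{2/3}w(y), and ‖u‖_{L²} = (‖φ'‖_{L²}² + k²‖φ‖_{L²}²)^{1/2}. If M ≥ 0 dominates F in H^{−1}, then (ν k²)^{1/2}‖u‖_{L²} + ν‖w'‖_{L²} + ν^{2/3}|k|^{1/3}‖w‖_{L²} ≤ C·M. -/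
/-- The `L²` pairing of two functions on the interval `[-1,1]`. -/
noncomputable def innI (f g : ℝ → ℂ) : ℂ :=
  ∫ y in Set.Icc (-1:ℝ) 1, f y * (starRingEnd ℂ) (g y)

/-- `M ≥ 0` dominates `F` in `H^{-1}` : `|⟨F, φ⟩| ≤ M ‖φ‖_{H¹}` for every `C¹` function
vanishing at `±1`. -/
def Dominates (F : ℝ → ℂ) (M : ℝ) : Prop :=
  ∀ g : ℝ → ℂ, ContDiff ℝ 1 g → g (-1) = 0 → g 1 = 0 →
    ‖innI F g‖ ≤ M * ((nL2 g ^ 2 + nL2 (deriv g) ^ 2) ^ ((1:ℝ)/2))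

section helpers

open MeasureTheory Set

lemma nL2_nonneg (f : ℝ → ℂ) : 0 ≤ nL2 f := by
  unfold nL2
  apply Real.rpow_nonneg
  exact integral_nonneg (fun y => by positivity)

lemma nL2_sq (f : ℝ → ℂ) : nL2 f ^ 2 = ∫ y in Icc (-1:ℝ) 1, ‖f y‖ ^ 2 := by
  unfold nL2
  rw [← Real.sqrt_eq_rpow, Real.sq_sqrt]
  exact integral_nonneg (fun y => by positivity)

lemma intI {E : Type*} [NormedAddCommGroup E] {f : ℝ → E} (hf : Continuous f) :
    IntegrableOn f (Icc (-1:ℝ) 1) := hf.continuousOn.integrableOn_Icc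

lemma cs_real (f g : ℝ → ℂ) (hf : Continuous f) (hg : Continuous g) :
    ∫ y in Icc (-1:ℝ) 1, ‖f y‖ * ‖g y‖ ≤ nL2 f * nL2 g := by
  set P := ∫ y in Icc (-1:ℝ) 1, ‖f y‖ * ‖g y‖ with hP
  have hP0 : 0 ≤ P := integral_nonneg (fun y => by positivity)
  have key : ∀ s : ℝ, 0 ≤ (nL2 g ^ 2) * (s * s) + (-2 * P) * s + nL2 f ^ 2 := by
    intro s
    have h1 : 0 ≤ ∫ y in Icc (-1:ℝ) 1, (‖f y‖ - s * ‖g y‖) ^ 2 :=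
      integral_nonneg (fun y => by positivity)
    have h2 : ∫ y in Icc (-1:ℝ) 1, (‖f y‖ - s * ‖g y‖) ^ 2
        = ∫ y in Icc (-1:ℝ) 1, ((s * s) * ‖g y‖ ^ 2 + (-2 * s) * (‖f y‖ * ‖g y‖) + ‖f y‖ ^ 2) := by
      congr 1; ext y; ring
    rw [h2, integral_add, integral_add, integral_const_mul, integral_const_mul, ← nL2_sq,
      ← nL2_sq, ← hP] at h1
    · linarith
    all_goals exact intI (by fun_prop)
  have hd := discrim_le_zero key
  unfold discrim at hd
  have : P ^ 2 ≤ (nL2 f * nL2 g) ^ 2 := by nlinarith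
  exact le_of_sq_le_sq₀ this (mul_nonneg (nL2_nonneg f) (nL2_nonneg g))
where
  le_of_sq_le_sq₀ {a b : ℝ} (h : a ^ 2 ≤ b ^ 2) (hb : 0 ≤ b) : a ≤ b := abs_le_of_sq_le_sq' h hb |>.2

lemma cs (f g : ℝ → ℂ) (hf : Continuous f) (hg : Continuous g) :
    ‖innI f g‖ ≤ nL2 f * nL2 g := by
  refine le_trans ?_ (cs_real f g hf hg)
  unfold innI
  refine (norm_integral_le_integral_norm _).trans (le_of_eq ?_)
  congr 1; ext y; simp

lemma nL2_mono (f g : ℝ → ℂ) (hf : Continuous f) (hg : Continuous g) (c : ℝ) (hc : 0 ≤ c)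
    (h : ∀ y, ‖f y‖ ≤ c * ‖g y‖) : nL2 f ≤ c * nL2 g := by
  have : nL2 f ^ 2 ≤ (c * nL2 g) ^ 2 := by
    rw [mul_pow, nL2_sq, nL2_sq, ← integral_const_mul]
    refine integral_mono (intI (by fun_prop)) (intI (by fun_prop)) (fun y => ?_)
    have := h y
    calc ‖f y‖ ^ 2 ≤ (c * ‖g y‖) ^ 2 := by gcongr
      _ = _ := by ring
  exact (abs_le_of_sq_le_sq' this (mul_nonneg hc (nL2_nonneg g))).2

lemma nL2_add (f g : ℝ → ℂ) (hf : Continuous f) (hg : Continuous g) :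
    nL2 (fun y => f y + g y) ≤ nL2 f + nL2 g := by
  have : nL2 (fun y => f y + g y) ^ 2 ≤ (nL2 f + nL2 g) ^ 2 := by
    have h1 : nL2 (fun y => f y + g y) ^ 2 ≤
        ∫ y in Icc (-1:ℝ) 1, (‖f y‖ ^ 2 + 2 * (‖f y‖ * ‖g y‖) + ‖g y‖ ^ 2) := by
      rw [nL2_sq]
      refine integral_mono (intI (by fun_prop)) (intI (by fun_prop)) (fun y => ?_)
      calc ‖f y + g y‖ ^ 2 ≤ (‖f y‖ + ‖g y‖) ^ 2 := by gcongr; exact norm_add_le _ _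
        _ = _ := by ring
    rw [integral_add, integral_add, integral_const_mul, ← nL2_sq, ← nL2_sq] at h1
    · have := cs_real f g hf hg
      nlinarith
    all_goals exact intI (by fun_prop)
  exact (abs_le_of_sq_le_sq' this (add_nonneg (nL2_nonneg f) (nL2_nonneg g))).2

lemma innI_self (f : ℝ → ℂ) : innI f f = ((nL2 f ^ 2 : ℝ) : ℂ) := by
  rw [nL2_sq, innI, ← integral_complex_ofReal]
  congr 1; ext y
  rw [Complex.mul_conj, Complex.normSq_eq_norm_sq]

lemma innI_add (f g h : ℝ → ℂ) (hf : Continuous f) (hg : Continuous g) (hh : Continuous h) :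
    innI (fun y => f y + g y) h = innI f h + innI g h := by
  unfold innI
  rw [← integral_add]
  · congr 1; ext y; ring
  all_goals exact intI (by fun_prop)

lemma innI_add_right (f g h : ℝ → ℂ) (hf : Continuous f) (hg : Continuous g) (hh : Continuous h) :
    innI f (fun y => g y + h y) = innI f g + innI f h := by
  unfold innI
  rw [← integral_add]
  · congr 1; ext y; simp only [map_add]; ring
  all_goals exact intI (by fun_prop)

lemma innI_smul (c : ℂ) (f g : ℝ → ℂ) :
    innI (fun y => c * f y) g = c * innI f g := by
  unfold innI
  rw [← integral_const_mul]
  congr 1; ext y; ring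

lemma ibp (f g : ℝ → ℂ) (hf : ContDiff ℝ 1 f) (hg : ContDiff ℝ 1 g)
    (h1 : g (-1) = 0) (h2 : g 1 = 0) : innI (deriv f) g = - innI f (deriv g) := by
  unfold innI
  rw [integral_Icc_eq_integral_Ioc, integral_Icc_eq_integral_Ioc,
    ← intervalIntegral.integral_of_le (by norm_num), ← intervalIntegral.integral_of_le (by norm_num)]
  have hdf : ∀ y, HasDerivAt f (deriv f y) y := fun y =>
    (hf.differentiable (by norm_num) y).hasDerivAt
  have hdg : ∀ y, HasDerivAt (fun y => (starRingEnd ℂ) (g y)) ((starRingEnd ℂ) (deriv g y)) y := by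
    intro y
    exact ((hg.differentiable (by norm_num) y).hasDerivAt).star
  have cf : Continuous (deriv f) := hf.continuous_deriv (by norm_num)
  have cg : Continuous (deriv g) := hg.continuous_deriv (by norm_num)
  have := intervalIntegral.integral_deriv_mul_eq_sub (a := (-1:ℝ)) (b := 1)
    (fun y _ => hdf y) (fun y _ => hdg y) (cf.intervalIntegrable _ _)
    (Continuous.intervalIntegrable (by fun_prop) _ _)
  rw [intervalIntegral.integral_add] at this
  · simp only [h1, h2, map_zero, mul_zero, sub_zero] at this
    exact eq_neg_of_add_eq_zero_left this
  · have := hg.continuous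
    exact Continuous.intervalIntegrable (by fun_prop) _ _
  · have := hf.continuous
    exact Continuous.intervalIntegrable (by fun_prop) _ _

noncomputable def chi (δ lam y : ℝ) : ℝ := 1 / (1 + ((y - lam) / δ) ^ 2)
noncomputable def rho (δ lam y : ℝ) : ℝ := ((y - lam) / δ) / (1 + ((y - lam) / δ) ^ 2)

lemma chi_pos (δ lam y : ℝ) : 0 < chi δ lam y := by unfold chi; positivity

lemma chi_le_one (δ lam y : ℝ) : chi δ lam y ≤ 1 := by
  unfold chi
  rw [div_le_one (by positivity)]
  nlinarith [sq_nonneg ((y - lam) / δ)]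

lemma chi_cont (δ lam : ℝ) : Continuous (chi δ lam) := by
  unfold chi
  refine Continuous.div (by fun_prop) (by fun_prop) (fun y => by positivity)

lemma rho_contDiff (δ lam : ℝ) : ContDiff ℝ 1 (rho δ lam) := by
  unfold rho
  refine ContDiff.div (by fun_prop) (by fun_prop) (fun y => by positivity)

lemma rho_sq_le (δ lam y : ℝ) : rho δ lam y ^ 2 ≤ chi δ lam y := by
  unfold rho chi
  rw [div_pow, div_le_div_iff₀ (by positivity) (by positivity)]
  nlinarith [sq_nonneg ((y - lam) / δ)]

lemma abs_rho_le (δ lam y : ℝ) : |rho δ lam y| ≤ √(chi δ lam y) :=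
  Real.abs_le_sqrt (rho_sq_le δ lam y)

lemma sqrt_chi_le_one (δ lam y : ℝ) : √(chi δ lam y) ≤ 1 := by
  exact Real.sqrt_le_one.2 (chi_le_one _ _ _)

lemma chi_le_sqrt (δ lam y : ℝ) : chi δ lam y ≤ √(chi δ lam y) := by
  apply Real.le_sqrt_of_sq_le
  nlinarith [chi_pos δ lam y, chi_le_one δ lam y]

lemma mul_rho (δ lam y : ℝ) (hδ : 0 < δ) : (y - lam) * rho δ lam y = δ * (1 - chi δ lam y) := by
  unfold rho chi
  have : (1 + ((y - lam) / δ) ^ 2) ≠ 0 := by positivity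
  field_simp
  ring

lemma rho_deriv (δ lam y : ℝ) (hδ : 0 < δ) :
    |deriv (rho δ lam) y| ≤ √(chi δ lam y) / δ := by
  have h1 : HasDerivAt (fun y : ℝ => (y - lam) / δ) (1 / δ) y :=
    ((hasDerivAt_id y).sub_const lam).div_const δ
  have h2 : HasDerivAt (fun y : ℝ => 1 + ((y - lam) / δ) ^ 2)
      ((2 : ℕ) * ((y - lam) / δ) ^ 1 * (1 / δ)) y := (h1.pow 2).const_add 1
  have h3 : HasDerivAt (rho δ lam) _ y := h1.div h2 (by positivity)
  rw [h3.deriv]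
  have e : ∀ t : ℝ, (1 / δ * (1 + t ^ 2) - t * ((2 : ℕ) * t ^ 1 * (1 / δ))) / (1 + t ^ 2) ^ 2
      = ((1 - t ^ 2) / (1 + t ^ 2) ^ 2) / δ := by
    intro t
    field_simp; push_cast; ring
  rw [e, abs_div, abs_of_pos hδ]
  refine div_le_div_of_nonneg_right ?_ hδ.le
  refine le_trans ?_ (chi_le_sqrt δ lam y)
  unfold chi
  generalize (y - lam) / δ = t
  rw [abs_div, abs_of_pos (show 0 < (1 + t ^ 2) ^ 2 by positivity),
    div_le_div_iff₀ (by positivity) (by positivity)]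
  have : |1 - t ^ 2| ≤ 1 + t ^ 2 := by
    rw [abs_le]; constructor <;> nlinarith [sq_nonneg t]
  nlinarith [sq_nonneg t]

lemma weighted (δ lam : ℝ) (hδ : 0 < δ) (f : ℝ → ℂ) (hf : ContDiff ℝ 1 f)
    (h1 : f (-1) = 0) (h2 : f 1 = 0) :
    nL2 (fun y => ((√(chi δ lam y) : ℝ) : ℂ) * f y) ^ 2 ≤ 4 * δ * (nL2 f * nL2 (deriv f)) := by
  have cf := hf.continuous
  have cdf : Continuous (deriv f) := hf.continuous_deriv (by norm_num)
  have cchi := chi_cont δ lam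
  set h : ℝ → ℝ := fun y => δ * Real.arctan ((y - lam) / δ) with hh
  have hder : ∀ y, HasDerivAt h (chi δ lam y) y := by
    intro y
    have h1 : HasDerivAt (fun y : ℝ => (y - lam) / δ) (1 / δ) y :=
      ((hasDerivAt_id y).sub_const lam).div_const δ
    have h3 := (h1.arctan).const_mul δ
    have e : chi δ lam y = δ * (1 / (1 + ((y - lam) / δ) ^ 2) * (1 / δ)) := by
      unfold chi
      field_simp
    rw [e]
    exact h3
  have hc : ContDiff ℝ 1 h := by
    rw [hh]
    exact contDiff_const.mul (Real.contDiff_arctan.comp (by fun_prop))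
  have ch := hc.continuous
  have hcc : ContDiff ℝ 1 (fun y => ((h y : ℝ) : ℂ)) := Complex.ofRealCLM.contDiff.comp hc
  have hbd : ∀ y, |h y| ≤ 2 * δ := by
    intro y
    simp only [hh, abs_mul, abs_of_pos hδ]
    have : |Real.arctan ((y - lam) / δ)| ≤ 2 := by
      rw [abs_le]
      have := Real.arctan_lt_pi_div_two ((y - lam) / δ)
      have := Real.neg_pi_div_two_lt_arctan ((y - lam) / δ)
      have := Real.pi_le_four
      constructor <;> linarith
    nlinarith
  have hD : deriv (fun y => ((h y : ℝ) : ℂ) * f y)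
      = fun y => ((chi δ lam y : ℝ) : ℂ) * f y + ((h y : ℝ) : ℂ) * deriv f y := by
    ext y
    exact ((hder y).ofReal_comp.mul (hf.differentiable (by norm_num) y).hasDerivAt).deriv
  have e1 := ibp (fun y => ((h y : ℝ) : ℂ) * f y) f (hcc.mul hf) hf h1 h2
  rw [hD, innI_add _ _ _ (by fun_prop) (by fun_prop) cf] at e1
  have e2 : innI (fun y => ((chi δ lam y : ℝ) : ℂ) * f y) f
      = innI (fun y => ((√(chi δ lam y) : ℝ) : ℂ) * f y) (fun y => ((√(chi δ lam y) : ℝ) : ℂ) * f y) := by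
    unfold innI
    congr 1; ext y
    simp only [map_mul, Complex.conj_ofReal]
    nth_rewrite 1 [← Real.mul_self_sqrt (chi_pos δ lam y).le]
    push_cast
    ring
  rw [e2, innI_self] at e1
  have n1 : nL2 (fun y => ((h y : ℝ) : ℂ) * f y) ≤ 2 * δ * nL2 f := by
    refine nL2_mono _ _ (by fun_prop) cf _ (by positivity) (fun y => ?_)
    rw [norm_mul, Complex.norm_real]
    exact mul_le_mul_of_nonneg_right (hbd y) (norm_nonneg _)
  have n2 : nL2 (fun y => ((h y : ℝ) : ℂ) * deriv f y) ≤ 2 * δ * nL2 (deriv f) := by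
    refine nL2_mono _ _ (by fun_prop) cdf _ (by positivity) (fun y => ?_)
    rw [norm_mul, Complex.norm_real]
    exact mul_le_mul_of_nonneg_right (hbd y) (norm_nonneg _)
  have c1 := cs (fun y => ((h y : ℝ) : ℂ) * f y) (deriv f) (by fun_prop) cdf
  have c2 := cs (fun y => ((h y : ℝ) : ℂ) * deriv f y) f (by fun_prop) cf
  have e3 := eq_sub_of_add_eq e1
  have e4 := norm_sub_le (-innI (fun y => ((h y : ℝ) : ℂ) * f y) (deriv f))
    (innI (fun y => ((h y : ℝ) : ℂ) * deriv f y) f)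
  rw [← e3, norm_neg, Complex.norm_real, Real.norm_of_nonneg (sq_nonneg _)] at e4
  have m1 := mul_le_mul_of_nonneg_right n1 (nL2_nonneg (deriv f))
  have m2 := mul_le_mul_of_nonneg_right n2 (nL2_nonneg f)
  nlinarith

lemma F_pair (ν k lam s : ℝ) (w F g : ℝ → ℂ) (hw : ContDiff ℝ 2 w)
    (hF : F = fun y : ℝ => -(ν : ℂ) * (deriv (deriv w) y - (k:ℂ)^2 * w y)
            + Complex.I * (k:ℂ) * ((y:ℂ) - (lam:ℂ)) * w y - (s : ℂ) * w y)
    (hg : ContDiff ℝ 1 g) (h1 : g (-1) = 0) (h2 : g 1 = 0) :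
    innI F g = ν * innI (deriv w) (deriv g) + ν * k ^ 2 * innI w g
      + Complex.I * k * innI (fun y => ((y:ℂ) - lam) * w y) g - s * innI w g := by
  have hw1 : ContDiff ℝ 1 (deriv w) := by
    have : ContDiff ℝ (1 + 1) w := by simpa [one_add_one_eq_two] using hw
    exact (contDiff_succ_iff_deriv.1 this).2.2
  have cw := hw.continuous
  have cdw := hw1.continuous
  have cddw : Continuous (deriv (deriv w)) := hw1.continuous_deriv (by norm_num)
  have cg := hg.continuous
  have hI := ibp (deriv w) g hw1 hg h1 h2
  have e : F = fun y => (((-(ν:ℂ)) * deriv (deriv w) y + (ν * k ^ 2) * w y)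
      + (Complex.I * k) * (((y:ℂ) - lam) * w y)) + (-(s:ℂ)) * w y := by
    rw [hF]; ext y; ring
  rw [e, innI_add _ _ _ (by fun_prop) (by fun_prop) cg, innI_add _ _ _ (by fun_prop) (by fun_prop) cg,
    innI_add _ _ _ (by fun_prop) (by fun_prop) cg, innI_smul, innI_smul, innI_smul, innI_smul, hI]
  ring

lemma H1_le (M : ℝ) (hM : 0 ≤ M) (F g : ℝ → ℂ) (hD : Dominates F M) (hg : ContDiff ℝ 1 g)
    (h1 : g (-1) = 0) (h2 : g 1 = 0) : ‖innI F g‖ ≤ M * (nL2 g + nL2 (deriv g)) := by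
  refine (hD g hg h1 h2).trans (mul_le_mul_of_nonneg_left ?_ hM)
  have a := nL2_nonneg g
  have b := nL2_nonneg (deriv g)
  rw [← Real.sqrt_eq_rpow]
  apply Real.sqrt_le_iff.2
  constructor
  · positivity
  · nlinarith [mul_nonneg a b]

lemma energy (ν k lam s M : ℝ) (w F : ℝ → ℂ) (hw : ContDiff ℝ 2 w)
    (hF : F = fun y : ℝ => -(ν : ℂ) * (deriv (deriv w) y - (k:ℂ)^2 * w y)
            + Complex.I * (k:ℂ) * ((y:ℂ) - (lam:ℂ)) * w y - (s : ℂ) * w y)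
    (h1 : w (-1) = 0) (h2 : w 1 = 0) (hM : 0 ≤ M) (hD : Dominates F M) :
    ν * nL2 (deriv w) ^ 2 + ν * k ^ 2 * nL2 w ^ 2 ≤ M * (nL2 w + nL2 (deriv w)) + s * nL2 w ^ 2 := by
  have hw1 : ContDiff ℝ 1 w := hw.of_le (by norm_num)
  have e := F_pair ν k lam s w F w hw hF hw1 h1 h2
  have h := H1_le M hM F w hD hw1 h1 h2
  have e2 : innI (fun y => ((y:ℂ) - lam) * w y) w
      = ((∫ y in Icc (-1:ℝ) 1, (y - lam) * ‖w y‖ ^ 2 : ℝ) : ℂ) := by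
    unfold innI
    rw [← integral_complex_ofReal]
    congr 1; ext y
    rw [mul_assoc, Complex.mul_conj, Complex.normSq_eq_norm_sq]
    push_cast
    rfl
  rw [e2, innI_self, innI_self] at e
  have hre := (Complex.abs_re_le_norm (innI F w)).trans h
  rw [e] at hre
  set J := ∫ y in Icc (-1:ℝ) 1, (y - lam) * ‖w y‖ ^ 2
  have e5 : ((ν:ℂ) * ((nL2 (deriv w) ^ 2 : ℝ) : ℂ) + ν * k ^ 2 * ((nL2 w ^ 2 : ℝ) : ℂ)
      + Complex.I * k * (J : ℂ) - s * ((nL2 w ^ 2 : ℝ) : ℂ)).re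
      = ν * nL2 (deriv w) ^ 2 + ν * k ^ 2 * nL2 w ^ 2 - s * nL2 w ^ 2 := by
    have : ((ν:ℂ) * ((nL2 (deriv w) ^ 2 : ℝ) : ℂ) + ν * k ^ 2 * ((nL2 w ^ 2 : ℝ) : ℂ)
      + Complex.I * k * (J : ℂ) - s * ((nL2 w ^ 2 : ℝ) : ℂ))
      = ((ν * nL2 (deriv w) ^ 2 + ν * k ^ 2 * nL2 w ^ 2 - s * nL2 w ^ 2 : ℝ) : ℂ)
        + ((k * J : ℝ) : ℂ) * Complex.I := by push_cast; ring
    rw [this]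
    simp only [Complex.add_re, Complex.ofReal_re, Complex.re_ofReal_mul, Complex.I_re]
    ring
  rw [e5] at hre
  linarith [le_abs_self (ν * nL2 (deriv w) ^ 2 + ν * k ^ 2 * nL2 w ^ 2 - s * nL2 w ^ 2)]

lemma test (ν k lam s M δ : ℝ) (w F f : ℝ → ℂ) (hw : ContDiff ℝ 2 w) (hν : 0 < ν) (hs : 0 ≤ s)
    (hδ : 0 < δ) (hδ1 : δ ≤ 1)
    (hF : F = fun y : ℝ => -(ν : ℂ) * (deriv (deriv w) y - (k:ℂ)^2 * w y)
            + Complex.I * (k:ℂ) * ((y:ℂ) - (lam:ℂ)) * w y - (s : ℂ) * w y)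
    (hf : ContDiff ℝ 1 f) (h1 : f (-1) = 0) (h2 : f 1 = 0) (hM : 0 ≤ M) (hD : Dominates F M) :
    ∃ Y : ℝ, 0 ≤ Y ∧ Y ^ 2 ≤ 4 * δ * (nL2 f * nL2 (deriv f)) ∧
      |k| * δ * ‖innI w f‖ ≤ M * (2 * (Y / δ) + nL2 (deriv f))
        + ν * nL2 (deriv w) * (Y / δ + nL2 (deriv f)) + ν * k ^ 2 * (nL2 w * nL2 f)
        + (s + |k| * δ) * (nL2 w * Y) := by
  have hw1 : ContDiff ℝ 1 (deriv w) := by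
    have : ContDiff ℝ (1 + 1) w := by simpa [one_add_one_eq_two] using hw
    exact (contDiff_succ_iff_deriv.1 this).2.2
  have cw := hw.continuous
  have cdw := hw1.continuous
  have cf := hf.continuous
  have cdf : Continuous (deriv f) := hf.continuous_deriv (by norm_num)
  have cchi := chi_cont δ lam
  have hr := rho_contDiff δ lam
  have cr := hr.continuous
  have cdr : Continuous (deriv (rho δ lam)) := hr.continuous_deriv (by norm_num)
  refine ⟨nL2 (fun y => ((√(chi δ lam y) : ℝ) : ℂ) * f y), nL2_nonneg _,
    weighted δ lam hδ f hf h1 h2, ?_⟩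
  set Y := nL2 (fun y => ((√(chi δ lam y) : ℝ) : ℂ) * f y) with hY
  have hY0 : 0 ≤ Y := nL2_nonneg _
  have hrc : ContDiff ℝ 1 (fun y => ((rho δ lam y : ℝ) : ℂ)) := Complex.ofRealCLM.contDiff.comp hr
  set g : ℝ → ℂ := fun y => ((rho δ lam y : ℝ) : ℂ) * f y with hgdef
  have hg : ContDiff ℝ 1 g := hrc.mul hf
  have cg := hg.continuous
  have cdg : Continuous (deriv g) := hg.continuous_deriv (by norm_num)
  have g1 : g (-1) = 0 := by simp [hgdef, h1]
  have g2 : g 1 = 0 := by simp [hgdef, h2]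
  have hdg : deriv g = fun y => ((deriv (rho δ lam) y : ℝ) : ℂ) * f y
      + ((rho δ lam y : ℝ) : ℂ) * deriv f y := by
    ext y
    exact ((hr.differentiable (by norm_num) y).hasDerivAt.ofReal_comp.mul
      (hf.differentiable (by norm_num) y).hasDerivAt).deriv
  have csq : Continuous (fun y => ((√(chi δ lam y) : ℝ) : ℂ) * f y) := by fun_prop
  have ngY : nL2 g ≤ Y := by
    have := nL2_mono g (fun y => ((√(chi δ lam y) : ℝ) : ℂ) * f y) cg csq 1 zero_le_one (fun y => by
      rw [hgdef, norm_mul, norm_mul, Complex.norm_real, Complex.norm_real, one_mul,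
        Real.norm_of_nonneg (Real.sqrt_nonneg _)]
      exact mul_le_mul_of_nonneg_right (abs_rho_le δ lam y) (norm_nonneg _))
    linarith
  have ngf : nL2 g ≤ nL2 f := by
    have := nL2_mono g f cg cf 1 zero_le_one (fun y => by
      rw [hgdef, norm_mul, Complex.norm_real]
      exact mul_le_mul_of_nonneg_right ((abs_rho_le δ lam y).trans (sqrt_chi_le_one _ _ _))
        (norm_nonneg _))
    linarith
  have ndg : nL2 (deriv g) ≤ Y / δ + nL2 (deriv f) := by
    rw [hdg]
    refine (nL2_add _ _ (by fun_prop) (by fun_prop)).trans (add_le_add ?_ ?_)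
    · have := nL2_mono (fun y => ((deriv (rho δ lam) y : ℝ) : ℂ) * f y)
        (fun y => ((√(chi δ lam y) : ℝ) : ℂ) * f y) (by fun_prop) csq (1 / δ) (by positivity)
        (fun y => by
          rw [norm_mul, norm_mul, Complex.norm_real, Complex.norm_real,
            Real.norm_of_nonneg (Real.sqrt_nonneg _), ← mul_assoc]
          refine mul_le_mul_of_nonneg_right ((rho_deriv δ lam y hδ).trans (le_of_eq ?_))
            (norm_nonneg _)
          ring)
      refine this.trans (le_of_eq ?_)
      rw [hY]; ring
    · have := nL2_mono (fun y => ((rho δ lam y : ℝ) : ℂ) * deriv f y) (deriv f) (by fun_prop) cdf 1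
        zero_le_one (fun y => by
          rw [norm_mul, Complex.norm_real]
          exact mul_le_mul_of_nonneg_right ((abs_rho_le δ lam y).trans (sqrt_chi_le_one _ _ _))
            (norm_nonneg _))
      linarith
  have nchi : nL2 (fun y => ((chi δ lam y : ℝ) : ℂ) * f y) ≤ Y := by
    have := nL2_mono (fun y => ((chi δ lam y : ℝ) : ℂ) * f y)
      (fun y => ((√(chi δ lam y) : ℝ) : ℂ) * f y) (by fun_prop) csq 1 zero_le_one (fun y => by
      rw [norm_mul, norm_mul, Complex.norm_real, Complex.norm_real, one_mul,
        Real.norm_of_nonneg (Real.sqrt_nonneg _), Real.norm_of_nonneg (chi_pos δ lam y).le]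
      exact mul_le_mul_of_nonneg_right (chi_le_sqrt δ lam y) (norm_nonneg _))
    linarith
  have e := F_pair ν k lam s w F g hw hF hg g1 g2
  have hH := H1_le M hM F g hD hg g1 g2
  have e2 : innI (fun y => ((y:ℂ) - lam) * w y) g
      = δ * (innI w f - innI w (fun y => ((chi δ lam y : ℝ) : ℂ) * f y)) := by
    have a1 : innI (fun y => ((y:ℂ) - lam) * w y) g
      = innI (fun y => (δ:ℂ) * (w y + (-1) * (((chi δ lam y : ℝ) : ℂ) * w y))) f := by
      unfold innI
      congr 1; ext y
      simp only [hgdef, map_mul, Complex.conj_ofReal]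
      have := congrArg (fun x : ℝ => (x : ℂ)) (mul_rho δ lam y hδ)
      push_cast at this
      linear_combination (w y * (starRingEnd ℂ) (f y)) * this
    have a2 : innI (fun y => ((chi δ lam y : ℝ) : ℂ) * w y) f
        = innI w (fun y => ((chi δ lam y : ℝ) : ℂ) * f y) := by
      unfold innI
      congr 1; ext y
      simp only [map_mul, Complex.conj_ofReal]
      ring
    rw [a1, innI_smul, innI_add _ _ _ cw (by fun_prop) cf, innI_smul, a2]
    ring
  rw [e2] at e
  have c1 := cs (deriv w) (deriv g) cdw cdg
  have c2 := cs w g cw cg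
  have c3 := cs w (fun y => ((chi δ lam y : ℝ) : ℂ) * f y) cw (by fun_prop)
  set P := innI w f
  set Q := innI w (fun y => ((chi δ lam y : ℝ) : ℂ) * f y)
  set R := innI (deriv w) (deriv g)
  set S := innI w g
  have key : Complex.I * k * δ * P = innI F g - ν * R - ν * k ^ 2 * S + Complex.I * k * δ * Q + s * S := by
    rw [e]; ring
  have nk : |k| * δ * ‖P‖ = ‖Complex.I * k * δ * P‖ := by
    simp [abs_of_pos hδ]
  have nb : ‖Complex.I * k * δ * P‖ ≤ ‖innI F g‖ + ν * ‖R‖ + ν * k ^ 2 * ‖S‖ + |k| * δ * ‖Q‖ + s * ‖S‖ := by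
    rw [key]
    refine (norm_add_le _ _).trans (add_le_add ((norm_add_le _ _).trans (add_le_add
      ((norm_sub_le _ _).trans (add_le_add ((norm_sub_le _ _).trans (add_le_add le_rfl ?_)) ?_)) ?_)) ?_)
    · simp [abs_of_pos hν]
    · simp [abs_of_pos hν]
    · simp [abs_of_pos hδ]
    · simp [abs_of_nonneg hs]
  rw [nk]
  refine nb.trans ?_
  have w0 := nL2_nonneg w
  have w1 := nL2_nonneg (deriv w)
  have hYd : Y ≤ Y / δ := by rw [le_div_iff₀ hδ]; nlinarith
  have t1 : ‖innI F g‖ ≤ M * (2 * (Y / δ) + nL2 (deriv f)) :=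
    hH.trans (mul_le_mul_of_nonneg_left (by linarith) hM)
  have t2 : ν * ‖R‖ ≤ ν * nL2 (deriv w) * (Y / δ + nL2 (deriv f)) := by
    rw [mul_assoc]
    exact mul_le_mul_of_nonneg_left (c1.trans (mul_le_mul_of_nonneg_left ndg w1)) hν.le
  have t3 : ν * k ^ 2 * ‖S‖ ≤ ν * k ^ 2 * (nL2 w * nL2 f) :=
    mul_le_mul_of_nonneg_left (c2.trans (mul_le_mul_of_nonneg_left ngf w0)) (by positivity)
  have t4 : |k| * δ * ‖Q‖ ≤ |k| * δ * (nL2 w * Y) :=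
    mul_le_mul_of_nonneg_left (c3.trans (mul_le_mul_of_nonneg_left nchi w0)) (by positivity)
  have t5 : s * ‖S‖ ≤ s * (nL2 w * Y) :=
    mul_le_mul_of_nonneg_left (c2.trans (mul_le_mul_of_nonneg_left ngY w0)) hs
  linarith

lemma alg1 (A B D Z M ε : ℝ) (hA0 : 0 ≤ A) (hB0 : 0 ≤ B) (hD0 : 0 ≤ D)
    (hM : 0 ≤ M) (hε : ε ≤ 1 / 10000)
    (hZ : Z ^ 2 ≤ 4 * (A * B))
    (hA : A ^ 2 ≤ M * (2 * Z + B) + B * (Z + B) + D ^ 2 + 2 * (A * Z))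
    (hE : B ^ 2 + D ^ 2 ≤ M * (A + B) + ε * A ^ 2) :
    A ≤ 2200 * M ∧ B ≤ 100 * M ∧ D ≤ 100 * M := by
  have z1 : Z ≤ A / 8 + 8 * B := by
    refine (abs_le_of_sq_le_sq' (?_ : Z ^ 2 ≤ (A / 8 + 8 * B) ^ 2) (by positivity)).2
    nlinarith [sq_nonneg (A / 8 - 8 * B)]
  have m1 := mul_le_mul_of_nonneg_left z1 hM
  have m2 := mul_le_mul_of_nonneg_left z1 hB0
  have m3 := mul_le_mul_of_nonneg_left z1 hA0
  have e1 : ε * A ^ 2 ≤ 1 / 10000 * A ^ 2 := mul_le_mul_of_nonneg_right hε (sq_nonneg _)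
  have E2 : B ^ 2 + D ^ 2 ≤ 2 * (M * A) + M ^ 2 + 2 / 10000 * A ^ 2 := by
    nlinarith [sq_nonneg (M - B), sq_nonneg D]
  have A2 : 3 / 8 * A ^ 2 ≤ 74 * M ^ 2 + 270 * (B ^ 2 + D ^ 2) := by
    nlinarith [sq_nonneg (A / 2 - 16.125 * B), sq_nonneg (A - M), sq_nonneg (8.5 * M - B), sq_nonneg D]
  have A3 : A ^ 2 ≤ (2200 * M) ^ 2 := by
    nlinarith [sq_nonneg (A / 4 - 1080 * M)]
  have hA' : A ≤ 2200 * M := (abs_le_of_sq_le_sq' A3 (by positivity)).2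
  have m4 := mul_le_mul_of_nonneg_left hA' hM
  refine ⟨hA', ?_, ?_⟩
  · exact (abs_le_of_sq_le_sq' (show B ^ 2 ≤ (100 * M) ^ 2 by nlinarith [sq_nonneg D]) (by positivity)).2
  · exact (abs_le_of_sq_le_sq' (show D ^ 2 ≤ (100 * M) ^ 2 by nlinarith [sq_nonneg B]) (by positivity)).2

set_option maxHeartbeats 1600000 in
lemma core (ν k δ ε s r lam M : ℝ) (φ w F : ℝ → ℂ) (hk : 1 ≤ |k|) (hδ : 0 < δ) (hδ1 : δ ≤ 1)
    (hν : ν = |k| * δ ^ 3) (hs : s = ε * (|k| * δ)) (hr : 0 < r) (hrk : r ^ 2 = |k| * δ)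
    (hε0 : 0 < ε) (hε : ε ≤ 1 / 10000)
    (hφ : ContDiff ℝ 4 φ) (p1 : φ (-1) = 0) (p2 : φ 1 = 0)
    (q1 : deriv (deriv φ) (-1) = 0) (q2 : deriv (deriv φ) 1 = 0)
    (hw : w = fun y : ℝ => deriv (deriv φ) y - (k:ℂ)^2 * φ y)
    (hF : F = fun y : ℝ => -(ν : ℂ) * (deriv (deriv w) y - (k:ℂ)^2 * w y)
            + Complex.I * (k:ℂ) * ((y:ℂ) - (lam:ℂ)) * w y - (s : ℂ) * w y)
    (hM : 0 ≤ M) (hD : Dominates F M) :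
    r ^ 3 * √(nL2 (deriv φ) ^ 2 + k ^ 2 * nL2 φ ^ 2) + ν * nL2 (deriv w)
      + |k| * δ ^ 2 * nL2 w ≤ 20000 * M := by
  have hK : 0 < |k| := by linarith
  have hν0 : 0 < ν := by rw [hν]; positivity
  have hs0 : 0 ≤ s := by rw [hs]; positivity
  have d1 : ContDiff ℝ 3 (deriv φ) := by
    have : ContDiff ℝ (3 + 1) φ := by norm_num; exact hφ
    exact (contDiff_succ_iff_deriv.1 this).2.2
  have d2 : ContDiff ℝ 2 (deriv (deriv φ)) := by
    have : ContDiff ℝ (2 + 1) (deriv φ) := by norm_num; exact d1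
    exact (contDiff_succ_iff_deriv.1 this).2.2
  have hw2 : ContDiff ℝ 2 w := by
    rw [hw]
    exact d2.sub (contDiff_const.mul (hφ.of_le (by norm_num)))
  have w1 : w (-1) = 0 := by simp [hw, p1, q1]
  have w2 : w 1 = 0 := by simp [hw, p2, q2]
  have hφ1 : ContDiff ℝ 1 φ := hφ.of_le (by norm_num)
  have hw1 : ContDiff ℝ 1 w := hw2.of_le (by norm_num)
  have hE := energy ν k lam s M w F hw2 hF w1 w2 hM hD
  obtain ⟨Y, hY0, hY2, hT⟩ := test ν k lam s M δ w F w hw2 hν0 hs0 hδ hδ1 hF hw1 w1 w2 hM hD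
  obtain ⟨X, hX0, hX2, hS⟩ := test ν k lam s M δ w F φ hw2 hν0 hs0 hδ hδ1 hF hφ1 p1 p2 hM hD
  have cφ := hφ.continuous
  have cw := hw2.continuous
  have hinn : innI w φ = -((nL2 (deriv φ) ^ 2 + k ^ 2 * nL2 φ ^ 2 : ℝ) : ℂ) := by
    have e : w = fun y => deriv (deriv φ) y + (-(k:ℂ)^2) * φ y := by rw [hw]; ext y; ring
    have cdd := d2.continuous
    rw [e, innI_add _ _ _ cdd (by fun_prop) cφ, innI_smul, innI_self,
      ibp (deriv φ) φ (d1.of_le (by norm_num)) hφ1 p1 p2, innI_self]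
    push_cast; ring
  rw [innI_self, Complex.norm_real, Real.norm_of_nonneg (sq_nonneg _)] at hT
  have hCS := cs w φ cw cφ
  rw [hinn, norm_neg, Complex.norm_real, Real.norm_of_nonneg (by positivity)] at hS hCS
  have n0 := nL2_nonneg w
  have n1 := nL2_nonneg (deriv w)
  have n2 := nL2_nonneg φ
  have n3 := nL2_nonneg (deriv φ)
  set U := √(nL2 (deriv φ) ^ 2 + k ^ 2 * nL2 φ ^ 2) with hU
  have hU0 : 0 ≤ U := Real.sqrt_nonneg _
  have hU2 : U ^ 2 = nL2 (deriv φ) ^ 2 + k ^ 2 * nL2 φ ^ 2 := Real.sq_sqrt (by positivity)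
  rw [← hU2] at hS hCS
  generalize nL2 w = W at *
  generalize nL2 (deriv w) = V at *
  generalize nL2 φ = P at *
  generalize nL2 (deriv φ) = Q at *
  rw [← sq_abs k] at hE hT hS hU2
  generalize |k| = K at *
  clear hF hw hinn hU
  have hQ : Q ≤ U := (abs_le_of_sq_le_sq' (show Q ^ 2 ≤ U ^ 2 by nlinarith [sq_nonneg (K * P)]) hU0).2
  have hP : K * P ≤ U := (abs_le_of_sq_le_sq' (show (K * P) ^ 2 ≤ U ^ 2 by nlinarith [sq_nonneg Q]) hU0).2
  -- first algebraic step
  have hYd : Y = (Y / δ) * δ := by field_simp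
  have hXd : X = (X / δ) * δ := by field_simp
  generalize Y / δ = y at *
  generalize X / δ = x at *
  subst hYd hXd
  have hy0 : 0 ≤ y := nonneg_of_mul_nonneg_left hY0 hδ
  have hx0 : 0 ≤ x := nonneg_of_mul_nonneg_left hX0 hδ
  obtain ⟨hA, hB, hD'⟩ := alg1 (K * δ ^ 2 * W) (ν * V) (ν * K * W) (ν * y) M ε (by positivity)
    (by positivity) (by positivity) hM hε (by
      have h1 : y ^ 2 * δ ≤ 4 * (W * V) := by
        have : (y ^ 2 * δ) * δ ≤ (4 * (W * V)) * δ := by nlinarith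
        exact le_of_mul_le_mul_right this hδ
      have h2 := mul_le_mul_of_nonneg_left h1 (show 0 ≤ ν * (K * δ ^ 2) by positivity)
      calc (ν * y) ^ 2 = ν * (K * δ ^ 2) * (y ^ 2 * δ) := by rw [hν]; ring
        _ ≤ _ := h2
        _ = _ := by ring) (by
      have h2 := mul_le_mul_of_nonneg_left hT hν0.le
      have e1 : ν * (K * δ * W ^ 2) = (K * δ ^ 2 * W) ^ 2 := by rw [hν]; ring
      have e2 : ν * ((s + K * δ) * (W * (y * δ))) = (1 + ε) * ((K * δ ^ 2 * W) * (ν * y)) := by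
        rw [hs]; ring
      have e3 : (1 + ε) * ((K * δ ^ 2 * W) * (ν * y)) ≤ 2 * ((K * δ ^ 2 * W) * (ν * y)) :=
        mul_le_mul_of_nonneg_right (by linarith) (by positivity)
      linarith) (by
      have h2 := mul_le_mul_of_nonneg_left hE hν0.le
      have e1 : ν * (s * W ^ 2) = ε * (K * δ ^ 2 * W) ^ 2 := by rw [hν, hs]; ring
      have e2 : ν * W ≤ K * δ ^ 2 * W := by
        refine mul_le_mul_of_nonneg_right ?_ n0
        rw [hν]
        nlinarith [mul_pos hK (pow_pos hδ 2)]
      have e3 := mul_le_mul_of_nonneg_left e2 hM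
      linarith)
  -- second step
  have hfin : r ^ 3 * U ≤ 10000 * M := by
    rcases eq_or_lt_of_le hU0 with h0 | hUpos
    · rw [← h0]; simp; exact hM
    rcases le_total r 1 with hr1 | hr1
    · have hrx : r * x ≤ 2 * U := by
        refine (abs_le_of_sq_le_sq' (?_ : (r * x) ^ 2 ≤ (2 * U) ^ 2) (by positivity)).2
        have h1 : x ^ 2 * δ ≤ 4 * (P * Q) := by
          have : (x ^ 2 * δ) * δ ≤ (4 * (P * Q)) * δ := by nlinarith
          exact le_of_mul_le_mul_right this hδ
        have h2 : K * (P * Q) ≤ U * U := by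
          rw [← mul_assoc]; exact mul_le_mul hP hQ n3 hU0
        calc (r * x) ^ 2 = K * (x ^ 2 * δ) := by rw [mul_pow, hrk]; ring
          _ ≤ K * (4 * (P * Q)) := mul_le_mul_of_nonneg_left h1 hK.le
          _ ≤ _ := by nlinarith
      have b1 : M * (2 * x + Q) ≤ M * (2 * x + U) := mul_le_mul_of_nonneg_left (by linarith) hM
      have b2 : ν * V * (x + Q) ≤ 100 * M * (x + U) :=
        mul_le_mul hB (by linarith) (by positivity) (by positivity)
      have b3 : ν * K ^ 2 * (W * P) ≤ 100 * M * U := by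
        calc ν * K ^ 2 * (W * P) = (ν * K * W) * (K * P) := by ring
          _ ≤ _ := mul_le_mul hD' hP (by positivity) (by positivity)
      have b4 : (s + K * δ) * (W * (x * δ)) ≤ 4400 * M * x := by
        calc (s + K * δ) * (W * (x * δ)) = (1 + ε) * ((K * δ ^ 2 * W) * x) := by rw [hs]; ring
          _ ≤ 2 * ((K * δ ^ 2 * W) * x) := mul_le_mul_of_nonneg_right (by linarith) (by positivity)
          _ ≤ 2 * ((2200 * M) * x) := by
            have := mul_le_mul_of_nonneg_right hA hx0
            linarith
          _ = _ := by ring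
      rw [← hrk] at hS b4
      have b5 : r ^ 2 * U ^ 2 ≤ 4502 * (M * x) + 201 * (M * U) := by linarith
      have b6 := mul_le_mul_of_nonneg_left b5 hr.le
      have b7 := mul_le_mul_of_nonneg_left hrx hM
      have b8 : r * (M * U) ≤ M * U := mul_le_of_le_one_left (by positivity) hr1
      have : (r ^ 3 * U) * U ≤ (10000 * M) * U := by
        have : 0 ≤ M * U := by positivity
        nlinarith
      exact le_of_mul_le_mul_right this hUpos
    · have h1 : K * U ≤ W := by
        have : (K * U) * U ≤ W * U := by
          calc (K * U) * U = K * U ^ 2 := by ring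
            _ ≤ K * (W * P) := mul_le_mul_of_nonneg_left hCS hK.le
            _ = W * (K * P) := by ring
            _ ≤ _ := mul_le_mul_of_nonneg_left hP n0
        exact le_of_mul_le_mul_right this hUpos
      calc r ^ 3 * U ≤ r ^ 4 * U :=
            mul_le_mul_of_nonneg_right (pow_le_pow_right₀ hr1 (by norm_num)) hU0
        _ = K * δ ^ 2 * (K * U) := by
            rw [show r ^ 4 = (r ^ 2) ^ 2 by ring, hrk]; ring
        _ ≤ K * δ ^ 2 * W := mul_le_mul_of_nonneg_left h1 (by positivity)
        _ ≤ _ := by linarith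
  linarith

end helpers

/-- The `H^{-1} → H^{1}` resolvent estimate with Navier-slip boundary conditions for the
shifted Orr–Sommerfeld operator. -/
theorem statement2 :
    ∃ ε₀ C : ℝ, 0 < ε₀ ∧ ε₀ < 1 ∧ 0 < C ∧
      ∀ (ν : ℝ) (k : ℤ) (ε lam : ℝ) (φ w F : ℝ → ℂ) (M : ℝ),
        0 < ν → ν ≤ 1 → 1 ≤ |k| → 0 < ε → ε ≤ ε₀ →
        ContDiff ℝ 4 φ →
        φ (-1) = 0 → φ 1 = 0 →
        deriv (deriv φ) (-1) = 0 → deriv (deriv φ) 1 = 0 →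
        (w = fun y : ℝ => deriv (deriv φ) y - (k:ℂ)^2 * φ y) →
        (F = fun y : ℝ => -(ν : ℂ) * (deriv (deriv w) y - (k:ℂ)^2 * w y)
            + Complex.I * (k:ℂ) * ((y:ℂ) - (lam:ℂ)) * w y
            - ((ε * ν ^ ((1:ℝ)/3) * |(k:ℝ)| ^ ((2:ℝ)/3) : ℝ) : ℂ) * w y) →
        0 ≤ M → Dominates F M →
        (ν * (k:ℝ)^2) ^ ((1:ℝ)/2) *
            ((nL2 (deriv φ) ^ 2 + (k:ℝ)^2 * nL2 φ ^ 2) ^ ((1:ℝ)/2))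
          + ν * nL2 (deriv w)
          + ν ^ ((2:ℝ)/3) * |(k:ℝ)| ^ ((1:ℝ)/3) * nL2 w
          ≤ C * M := by
  refine ⟨1 / 10000, 20000, by norm_num, by norm_num, by norm_num, ?_⟩
  intro ν k ε lam φ w F M hν hν1 hk hε0 hε hφ p1 p2 q1 q2 hw hF hM hD
  have hK : (1:ℝ) ≤ |(k:ℝ)| := by exact_mod_cast hk
  have hK0 : 0 < |(k:ℝ)| := by linarith
  set K := |(k:ℝ)| with hKdef
  set δ := (ν / K) ^ ((1:ℝ)/3) with hδdef
  have hδ : 0 < δ := by positivity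
  have hδ1 : δ ≤ 1 := Real.rpow_le_one (by positivity) (by rw [div_le_one hK0]; linarith) (by norm_num)
  have hδ3 : δ ^ 3 = ν / K := by
    rw [hδdef, ← Real.rpow_natCast, ← Real.rpow_mul (by positivity)]; norm_num
  have hνe : ν = K * δ ^ 3 := by rw [hδ3]; field_simp
  have c3 : ((δ:ℝ) ^ 3) ^ ((1:ℝ)/3) = δ := by
    rw [← Real.rpow_natCast, ← Real.rpow_mul hδ.le]; norm_num
  have c32 : ((δ:ℝ) ^ 3) ^ ((2:ℝ)/3) = δ ^ 2 := by
    rw [← Real.rpow_natCast, ← Real.rpow_mul hδ.le, ← Real.rpow_natCast]; norm_num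
  have k3 : K ^ ((1:ℝ)/3) * K ^ ((2:ℝ)/3) = K := by
    rw [← Real.rpow_add hK0]; norm_num
  have x1 : ν ^ ((1:ℝ)/3) * K ^ ((2:ℝ)/3) = K * δ := by
    rw [hνe, Real.mul_rpow hK0.le (by positivity), c3]
    linear_combination δ * k3
  have x2 : ν ^ ((2:ℝ)/3) * K ^ ((1:ℝ)/3) = K * δ ^ 2 := by
    rw [hνe, Real.mul_rpow hK0.le (by positivity), c32]
    linear_combination δ ^ 2 * k3
  have hr : 0 < √(K * δ) := Real.sqrt_pos.2 (by positivity)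
  have hr2 : √(K * δ) ^ 2 = K * δ := Real.sq_sqrt (by positivity)
  have x3 : (ν * (k:ℝ)^2) ^ ((1:ℝ)/2) = √(K * δ) ^ 3 := by
    rw [← Real.sqrt_eq_rpow, ← sq_abs (k:ℝ), ← hKdef]
    rw [show ν * K ^ 2 = (√(K * δ) ^ 3) ^ 2 by
      rw [← pow_mul, mul_comm 3 2, pow_mul, hr2, hνe]; ring]
    exact Real.sqrt_sq (by positivity)
  have main := core ν k δ ε (ε * (K * δ)) (√(K * δ)) lam M φ w F hK hδ hδ1 hνe rfl hr hr2 hε0 hε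
    hφ p1 p2 q1 q2 (by rw [hw]; push_cast; rfl)
    (by rw [hF, mul_assoc ε, x1]; push_cast; rfl) hM hD
  rw [x3, x2, ← Real.sqrt_eq_rpow]
  exact main
end
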